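/- There exists a universal constant K > 0 such that the following holds. Let N be a positive integer, let C = [c_{ij}] ∈ R^{N×N} be doubly centered with all diagonal entries zero, and let A = [a_{ij}] ∈ R^{N×N} be arbitrary. Let Q_QF := Σ_{i,j∈[N]} c_{ij} a_{π(i)π(j)} and define ν := max over i,j ∈ [N] and σ, σ̃ ∈ S_N of | Σ_{k=1}^{⌊N/2⌋} c_{iσ(k)} a_{jσ̃(k)} |, and assume ν > 0. Then for every t ≥ 0, P( Q_QF − E[Q_QF] ≥ t ) ≤ exp( − (t / (K ν)) · log( 1 + N ν t / ( K ‖C‖_op² ‖A‖_F² ) ) ). -/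

import Mathlib

open scoped BigOperators Classical

/-- Spectral (operator) norm of a real matrix. -/
noncomputable def opNorm {m n : ℕ} (M : Matrix (Fin m) (Fin n) ℝ) : ℝ :=
  ‖LinearMap.toContinuousLinearMap (Matrix.toEuclideanLin M)‖

/-- Frobenius norm of a real matrix. -/
noncomputable def frobNorm {m n : ℕ} (M : Matrix (Fin m) (Fin n) ℝ) : ℝ :=
  Real.sqrt (∑ i, ∑ j, (M i j) ^ 2)

/-- Expectation of `f` under the uniform distribution on `S_N`. -/
noncomputable def permExp (N : ℕ) (f : Equiv.Perm (Fin N) → ℝ) : ℝ :=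
  (∑ σ : Equiv.Perm (Fin N), f σ) / (Nat.factorial N : ℝ)

/-- Probability of an event under the uniform distribution on `S_N`. -/
noncomputable def permProb (N : ℕ) (p : Equiv.Perm (Fin N) → Prop) : ℝ :=
  ((Finset.univ.filter p).card : ℝ) / (Nat.factorial N : ℝ)


/-! Fix a set `L` of about half of the positions and disjoint pairs `{x, x'}` of positions outside
`L`. Given the values of `π` on `L`, these enter the quadratic form through the linear statistic
`∑ x, D x (π x)` with `D x l = ∑ y ∈ L, c x y * a l (π y)`, and swapping the values at the two
positions of a pair lowers it by twice a *cross difference* of `D`. The swap turns the cross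
difference into its negative, so that `exp` may be averaged to `cosh`; since cross differences are
bounded in terms of `ν`, their `cosh` is controlled by the squares of the entries of `D`, whose
total is at most `‖C‖_op² ‖A‖_F²` whatever `π` is on `L`. Hence the sum of the cross differences
over all pairs has a Bennett-type exponential moment.

Averaged over a random relabelling of the positions, this sum becomes a fixed multiple of the
quadratic form, because `C` has vanishing diagonal and column sums. By Jensen's inequality the
quadratic form inherits the exponential moment, and Markov's inequality at an exponent proportional
to `log (1 + w) / ν`, where `w = N ν t / (K ‖C‖_op² ‖A‖_F²)`, gives the tail bound. -/

section Hyperbolic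

open Real

theorem convexOn_sinh : ConvexOn ℝ (Set.Ici 0) sinh := by
  refine convexOn_of_deriv2_nonneg (convex_Ici 0) continuous_sinh.continuousOn
    differentiable_sinh.differentiableOn ?_ fun x hx ↦ ?_
  · simpa only [Real.deriv_sinh] using differentiable_cosh.differentiableOn
  · rw [interior_Ici, Set.mem_Ioi] at hx
    simpa using hx.le

theorem sinh_mul_le {a y : ℝ} (ha₀ : 0 ≤ a) (ha₁ : a ≤ 1) (hy : 0 ≤ y) :
    sinh (a * y) ≤ a * sinh y := by
  simpa using convexOn_sinh.2 hy Set.self_mem_Ici ha₀ (sub_nonneg.2 ha₁) (add_sub_cancel a 1)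

theorem cosh_eq_one_add_two_mul_sinh_half_sq (x : ℝ) : cosh x = 1 + 2 * sinh (x / 2) ^ 2 := by
  have h := cosh_two_mul (x / 2)
  rw [mul_div_cancel₀ x two_ne_zero, cosh_sq] at h
  linarith

theorem cosh_le_one_add_mul_sq {x s : ℝ} (h : |x| ≤ s) :
    cosh x ≤ 1 + (cosh s - 1) / s ^ 2 * x ^ 2 := by
  rcases ((abs_nonneg x).trans h).eq_or_lt with rfl | hs
  · simp [abs_nonpos_iff.1 h]
  have hsinh : sinh (|x| / 2) ≤ |x| / s * sinh (s / 2) := by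
    convert sinh_mul_le (a := |x| / s) (y := s / 2) (by positivity) ((div_le_one hs).2 h)
      (by positivity) using 2
    field_simp
  have hsq := pow_le_pow_left₀ (sinh_nonneg_iff.2 (by positivity)) hsinh 2
  calc cosh x = 1 + 2 * sinh (|x| / 2) ^ 2 := by
        rw [← cosh_abs, cosh_eq_one_add_two_mul_sinh_half_sq]
    _ ≤ 1 + 2 * (|x| / s * sinh (s / 2)) ^ 2 := by gcongr
    _ = 1 + (cosh s - 1) / s ^ 2 * x ^ 2 := by
        rw [cosh_eq_one_add_two_mul_sinh_half_sq s, mul_pow, div_pow, sq_abs]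
        ring

theorem cosh_log_one_add_sub_one_le {w : ℝ} (hw : 0 ≤ w) :
    cosh (log (1 + w)) - 1 ≤ w / 2 * log (1 + w) := by
  have hw' : 0 < 1 + w := by positivity
  calc cosh (log (1 + w)) - 1 = w / 2 * (1 - (1 + w)⁻¹) := by
        rw [cosh_log hw']
        field_simp
        ring
    _ ≤ w / 2 * log (1 + w) := by
        gcongr
        exact one_sub_inv_le_log_of_pos hw'

theorem card_mul_exp_le_sum_exp {α : Type*} [Fintype α] {f : α → ℝ} {q : ℝ}
    (hf : ∑ a, f a = Fintype.card α * q) : Fintype.card α * exp q ≤ ∑ a, exp (f a) :=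
  calc Fintype.card α * exp q = ∑ a, exp q * (f a - q + 1) := by
        rw [← Finset.mul_sum, Finset.sum_add_distrib, Finset.sum_sub_distrib, hf]
        simp
        ring
    _ ≤ ∑ a, exp q * exp (f a - q) := by
        gcongr with a
        exact add_one_le_exp _
    _ = ∑ a, exp (f a) := by simp [← exp_add]

theorem sum_mul_exp_eq_sum_mul_cosh {α : Type*} [Fintype α] (e : α ≃ α) {H T : α → ℝ}
    (hH : ∀ a, H (e a) = H a) (hT : ∀ a, T (e a) = -T a) :
    ∑ a, H a * exp (T a) = ∑ a, H a * cosh (T a) := by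
  have hneg : ∑ a, H a * exp (T a) = ∑ a, H a * exp (-T a) := by
    simpa only [hH, hT] using (e.sum_comp fun a ↦ H a * exp (T a)).symm
  have hcosh (a : α) : H a * cosh (T a) = (H a * exp (T a) + H a * exp (-T a)) / 2 := by
    rw [cosh_eq]
    ring
  simp only [hcosh, ← Finset.sum_div, Finset.sum_add_distrib, ← hneg, add_self_div_two]

end Hyperbolic

section Permutation

open Finset Equiv

variable {ι β : Type*}

/-- `DeterminedOff F f` says that `f σ` depends only on the values of the permutation `σ` at
positions outside `F`: it is measurable with respect to the information available while the
positions in `F` are still unrevealed. -/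
def DeterminedOff (F : Finset ι) (f : Perm ι → β) : Prop :=
  ∀ ⦃σ τ : Perm ι⦄, (∀ z ∉ F, σ z = τ z) → f σ = f τ

theorem DeterminedOff.mono {E F : Finset ι} {f : Perm ι → β} (hf : DeterminedOff E f)
    (h : F ⊆ E) : DeterminedOff F f :=
  fun _ _ hστ ↦ hf fun z hz ↦ hστ z fun hzF ↦ hz (h hzF)

variable [DecidableEq ι]

theorem DeterminedOff.apply_mul_swap {F : Finset ι} {f : Perm ι → β} (hf : DeterminedOff F f)
    {z w : ι} (hz : z ∈ F) (hw : w ∈ F) (σ : Perm ι) : f (σ * swap z w) = f σ :=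
  hf fun v hv ↦ by
    rw [Perm.mul_apply, swap_apply_of_ne_of_ne] <;> rintro rfl <;> contradiction

variable [Fintype ι]

theorem DeterminedOff.card_mul_sum_apply {F : Finset ι} {u : Perm ι → ι → ℝ}
    (hu : DeterminedOff F u) {x : ι} (hx : x ∈ F) :
    #F * ∑ σ, u σ (σ x) = ∑ σ, ∑ z ∈ F, u σ (σ z) := by
  have hxz : ∀ z ∈ F, ∑ σ, u σ (σ z) = ∑ σ, u σ (σ x) := fun z hz ↦ by
    simpa [hu.apply_mul_swap hx hz] using
      (Equiv.sum_comp (Equiv.mulRight (swap x z)) fun σ ↦ u σ (σ z)).symm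
  rw [sum_comm, sum_congr rfl hxz, sum_const, nsmul_eq_mul]

theorem DeterminedOff.sum_apply_le {F : Finset ι} {u : Perm ι → ι → ℝ}
    (hu : DeterminedOff F u) (hu₀ : ∀ σ l, 0 ≤ u σ l) {x : ι} (hx : x ∈ F) {d : ℕ}
    (hd : 0 < d) (hdF : d ≤ #F) : ∑ σ, u σ (σ x) ≤ (∑ σ, ∑ l, u σ l) / d := by
  rw [le_div_iff₀' (by exact_mod_cast hd)]
  calc d * ∑ σ, u σ (σ x) ≤ #F * ∑ σ, u σ (σ x) := by
        gcongr
        exact sum_nonneg fun σ _ ↦ hu₀ σ _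
    _ = ∑ σ, ∑ z ∈ F, u σ (σ z) := hu.card_mul_sum_apply hx
    _ ≤ ∑ σ, ∑ z, u σ (σ z) := sum_le_sum fun σ _ ↦
        sum_le_sum_of_subset_of_nonneg (subset_univ F) fun _ _ _ ↦ hu₀ σ _
    _ = ∑ σ, ∑ l, u σ l := sum_congr rfl fun σ _ ↦ Equiv.sum_comp σ (u σ)

-- Symmetrizing under the swap of `x` and `x'` removes the first-order term of `exp (T σ)`.
theorem sum_mul_exp_le_of_mul_swap_eq_neg {F : Finset ι} {x x' : ι} (hx : x ∈ F) (hx' : x' ∈ F)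
    {H T : Perm ι → ℝ} (hH : DeterminedOff F H) (hH₀ : ∀ σ, 0 ≤ H σ)
    (hT : ∀ σ, T (σ * swap x x') = -T σ)
    {u : Perm ι → ι → ℝ} (hu : DeterminedOff F u) (hu₀ : ∀ σ l, 0 ≤ u σ l)
    (hTu : ∀ σ, Real.cosh (T σ) ≤ 1 + (u σ (σ x) + u σ (σ x')))
    {d : ℕ} (hd : 0 < d) (hdF : d ≤ #F) :
    ∑ σ, H σ * Real.exp (T σ) ≤ ∑ σ, H σ * Real.exp (2 / d * ∑ l, u σ l) := by
  have hHu : DeterminedOff F fun σ l ↦ H σ * u σ l := fun σ τ h ↦ by simp only [hH h, hu h]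
  have hHu₀ (σ : Perm ι) (l : ι) : 0 ≤ H σ * u σ l := mul_nonneg (hH₀ σ) (hu₀ σ l)
  calc ∑ σ, H σ * Real.exp (T σ) = ∑ σ, H σ * Real.cosh (T σ) :=
        sum_mul_exp_eq_sum_mul_cosh (Equiv.mulRight (swap x x'))
          (hH.apply_mul_swap hx hx') hT
    _ ≤ ∑ σ, H σ * (1 + (u σ (σ x) + u σ (σ x'))) :=
        sum_le_sum fun σ _ ↦ mul_le_mul_of_nonneg_left (hTu σ) (hH₀ σ)
    _ = ∑ σ, H σ + (∑ σ, H σ * u σ (σ x) + ∑ σ, H σ * u σ (σ x')) := by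
        simp only [mul_add, mul_one, sum_add_distrib]
    _ ≤ ∑ σ, H σ + ((∑ σ, ∑ l, H σ * u σ l) / d + (∑ σ, ∑ l, H σ * u σ l) / d) := by
        gcongr
        · exact hHu.sum_apply_le hHu₀ hx hd hdF
        · exact hHu.sum_apply_le hHu₀ hx' hd hdF
    _ = ∑ σ, H σ * (2 / d * ∑ l, u σ l + 1) := by
        simp only [mul_add, mul_one, sum_add_distrib, mul_left_comm (H _), ← mul_sum]
        ring
    _ ≤ ∑ σ, H σ * Real.exp (2 / d * ∑ l, u σ l) :=
        sum_le_sum fun σ _ ↦ mul_le_mul_of_nonneg_left (Real.add_one_le_exp _) (hH₀ σ)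

end Permutation

section CrossDifference

open Finset Equiv

variable {m n : Type*}

/-- Half the mixed second difference of a matrix over the rows `x, x'` and the columns `a, a'`.
For `a = σ x`, `a' = σ x'` it is half the decrease of `∑ z, M z (σ z)` caused by swapping the
values of the permutation `σ` at `x` and `x'`. -/
noncomputable def crossDiff (M : Matrix m n ℝ) (x x' : m) (a a' : n) : ℝ :=
  (M x a - M x a' - M x' a + M x' a') / 2

theorem crossDiff_swap (M : Matrix m n ℝ) (x x' : m) (a a' : n) :
    crossDiff M x x' a' a = -crossDiff M x x' a a' := by
  unfold crossDiff
  ring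

theorem abs_crossDiff_le {M : Matrix m n ℝ} {s : ℝ} (hM : ∀ x a, |M x a| ≤ s / 2)
    (x x' : m) (a a' : n) : |crossDiff M x x' a a'| ≤ s := by
  have hxa := abs_le.1 (hM x a)
  have hxa' := abs_le.1 (hM x a')
  have hx'a := abs_le.1 (hM x' a)
  have hx'a' := abs_le.1 (hM x' a')
  unfold crossDiff
  rw [abs_le]
  constructor <;> linarith

theorem crossDiff_sq_le (M : Matrix m n ℝ) (x x' : m) (a a' : n) :
    crossDiff M x x' a a' ^ 2 ≤ (M x a ^ 2 + M x' a ^ 2) + (M x a' ^ 2 + M x' a' ^ 2) := by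
  unfold crossDiff
  linarith [sq_nonneg (M x a + M x a'), sq_nonneg (M x a + M x' a),
    sq_nonneg (M x a - M x' a'), sq_nonneg (M x a' - M x' a), sq_nonneg (M x a' + M x' a'),
    sq_nonneg (M x' a + M x' a')]

theorem cosh_crossDiff_le {M : Matrix m n ℝ} {s : ℝ} (hM : ∀ x a, |M x a| ≤ s / 2)
    (x x' : m) (a a' : n) :
    Real.cosh (crossDiff M x x' a a') ≤
      1 + ((Real.cosh s - 1) / s ^ 2 * (M x a ^ 2 + M x' a ^ 2) +
        (Real.cosh s - 1) / s ^ 2 * (M x a' ^ 2 + M x' a' ^ 2)) := by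
  have hs : 0 ≤ (Real.cosh s - 1) / s ^ 2 :=
    div_nonneg (sub_nonneg.2 (Real.one_le_cosh s)) (sq_nonneg s)
  rw [← mul_add]
  calc Real.cosh (crossDiff M x x' a a')
      ≤ 1 + (Real.cosh s - 1) / s ^ 2 * crossDiff M x x' a a' ^ 2 :=
        cosh_le_one_add_mul_sq (abs_crossDiff_le hM x x' a a')
    _ ≤ _ := by
        gcongr
        exact crossDiff_sq_le M x x' a a'

variable {ι κ : Type*}

/-- The cross difference of the random matrix `D σ` at the `p`-th pair of positions
`e (p, false)`, `e (p, true)` and at their values under `σ`. The embedding `e` makes all these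
positions distinct. -/
noncomputable def pairDiff (D : Perm ι → Matrix ι ι ℝ) (e : κ × Bool ↪ ι) (p : κ)
    (σ : Perm ι) : ℝ :=
  crossDiff (D σ) (e (p, false)) (e (p, true)) (σ (e (p, false))) (σ (e (p, true)))

theorem determinedOff_pairDiff {D : Perm ι → Matrix ι ι ℝ} {F : Finset ι}
    (hD : DeterminedOff F D) {e : κ × Bool ↪ ι} {p : κ} (hp : ∀ b, e (p, b) ∉ F) :
    DeterminedOff F (pairDiff D e p) := fun σ τ h ↦ by
  simp only [pairDiff, hD h, h _ (hp _)]

variable [DecidableEq ι]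

theorem pairDiff_mul_swap {D : Perm ι → Matrix ι ι ℝ} {F : Finset ι} (hD : DeterminedOff F D)
    {e : κ × Bool ↪ ι} {p : κ} (hp : ∀ b, e (p, b) ∈ F) (σ : Perm ι) :
    pairDiff D e p (σ * swap (e (p, false)) (e (p, true))) = -pairDiff D e p σ := by
  simp only [pairDiff, hD.apply_mul_swap (hp _) (hp _), Perm.mul_apply, swap_apply_left,
    swap_apply_right]
  exact crossDiff_swap _ _ _ _ _

variable [Fintype ι]

theorem sum_mul_exp_pairDiff_le {D : Perm ι → Matrix ι ι ℝ} {F : Finset ι}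
    (hD : DeterminedOff F D) {s : ℝ} (hs : ∀ σ x l, |D σ x l| ≤ s / 2)
    {e : κ × Bool ↪ ι} {p : κ} (hp : ∀ b, e (p, b) ∈ F)
    {H : Perm ι → ℝ} (hH : DeterminedOff F H) (hH₀ : ∀ σ, 0 ≤ H σ)
    {d : ℕ} (hd : 0 < d) (hdF : d ≤ #F) :
    ∑ σ, H σ * Real.exp (pairDiff D e p σ) ≤
      ∑ σ, H σ * Real.exp (2 / d * ((Real.cosh s - 1) / s ^ 2 *
        ∑ b, ∑ l, D σ (e (p, b)) l ^ 2)) := by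
  set G := (Real.cosh s - 1) / s ^ 2
  have hG₀ : 0 ≤ G := div_nonneg (sub_nonneg.2 (Real.one_le_cosh s)) (sq_nonneg s)
  refine (sum_mul_exp_le_of_mul_swap_eq_neg (hp false) (hp true) hH hH₀
    (pairDiff_mul_swap hD hp)
    (u := fun σ l ↦ G * (D σ (e (p, false)) l ^ 2 + D σ (e (p, true)) l ^ 2))
    (fun σ τ h ↦ by simp only [hD h]) (fun σ l ↦ by positivity)
    (fun σ ↦ cosh_crossDiff_le (hs σ) _ _ _ _) hd hdF).trans_eq ?_
  refine sum_congr rfl fun σ _ ↦ ?_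
  rw [← mul_sum, sum_add_distrib, Fintype.sum_bool, add_comm (∑ l, D σ (e (p, false)) l ^ 2)]

-- The pairs are peeled off one at a time: given all other positions, the weight and the other
-- pair differences are constant, and the bound for the peeled pair only involves `D`.
theorem sum_mul_exp_sum_pairDiff_le {D : Perm ι → Matrix ι ι ℝ} {E : Finset ι}
    (hD : DeterminedOff E D) {s : ℝ} (hs : ∀ σ x l, |D σ x l| ≤ s / 2)
    {e : κ × Bool ↪ ι} (he : ∀ q, e q ∈ E) {d : ℕ} (hd : 0 < d) (P : Finset κ)
    (hP : d + 2 * #P ≤ #E + 2) {H : Perm ι → ℝ} (hH : DeterminedOff E H)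
    (hH₀ : ∀ σ, 0 ≤ H σ) :
    ∑ σ, H σ * Real.exp (∑ p ∈ P, pairDiff D e p σ) ≤
      ∑ σ, H σ * Real.exp (2 / d * ((Real.cosh s - 1) / s ^ 2 *
        ∑ p ∈ P, ∑ b, ∑ l, D σ (e (p, b)) l ^ 2)) := by
  classical
  induction P using Finset.induction_on generalizing H with
  | empty => simp
  | insert a P ha ih =>
    rw [card_insert_of_notMem ha] at hP
    set R := (P ×ˢ univ).map e with hR
    have hRE : R ⊆ E := fun z hz ↦ by
      obtain ⟨q, -, rfl⟩ := mem_map.1 hz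
      exact he q
    have hcard : d ≤ #(E \ R) := by
      have : #R = #P * 2 := by simp [hR]
      rw [card_sdiff_of_subset hRE]
      omega
    have hD' := hD.mono (sdiff_subset (s := E) (t := R))
    have hH' := hH.mono (sdiff_subset (s := E) (t := R))
    have hpair : ∀ p ∈ P, DeterminedOff (E \ R) (pairDiff D e p) := fun p hp ↦
      determinedOff_pairDiff hD' fun b ↦ by simp [hR, hp]
    let V (p : κ) (σ : Perm ι) : ℝ :=
      2 / d * ((Real.cosh s - 1) / s ^ 2 * ∑ b, ∑ l, D σ (e (p, b)) l ^ 2)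
    calc ∑ σ, H σ * Real.exp (∑ p ∈ insert a P, pairDiff D e p σ)
        = ∑ σ, H σ * Real.exp (∑ p ∈ P, pairDiff D e p σ) * Real.exp (pairDiff D e a σ) := by
          simp only [sum_insert ha, Real.exp_add, mul_assoc, mul_comm (Real.exp (pairDiff D e a _))]
      _ ≤ ∑ σ, H σ * Real.exp (∑ p ∈ P, pairDiff D e p σ) * Real.exp (V a σ) :=
          sum_mul_exp_pairDiff_le hD' hs (fun b ↦ by simp [hR, he, ha])
            (fun σ τ h ↦ by simp only [hH' h, sum_congr rfl fun p hp ↦ hpair p hp h])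
            (fun σ ↦ mul_nonneg (hH₀ σ) (Real.exp_nonneg _)) hd hcard
      _ = ∑ σ, H σ * Real.exp (V a σ) * Real.exp (∑ p ∈ P, pairDiff D e p σ) :=
          sum_congr rfl fun σ _ ↦ mul_right_comm _ _ _
      _ ≤ ∑ σ, H σ * Real.exp (V a σ) * Real.exp (2 / d * ((Real.cosh s - 1) / s ^ 2 *
            ∑ p ∈ P, ∑ b, ∑ l, D σ (e (p, b)) l ^ 2)) :=
          ih (by omega) (fun σ τ h ↦ by simp only [V, hH h, hD h])
            fun σ ↦ mul_nonneg (hH₀ σ) (Real.exp_nonneg _)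
      _ = _ := by simp only [V, sum_insert ha, mul_add, Real.exp_add, mul_assoc]

end CrossDifference

section PartialField

open Finset Equiv
open scoped Matrix.Norms.L2Operator

variable {ι κ : Type*}

/-- The random matrix `∑ y ∈ L, C x y * A l (σ y)`: the part of the quadratic form
`∑ x, ∑ y, C x y * A (σ x) (σ y)` which the positions in `L` contribute to the row `x` if
`σ x = l`. -/
noncomputable def partialField (C A : Matrix ι ι ℝ) (L : Finset ι) (σ : Perm ι) :
    Matrix ι ι ℝ :=
  Matrix.of fun x l ↦ ∑ y ∈ L, C x y * A l (σ y)

theorem crossDiff_partialField (C A : Matrix ι ι ℝ) (L : Finset ι) (σ : Perm ι)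
    (x x' a a' : ι) :
    crossDiff (partialField C A L σ) x x' a a' =
      (∑ y ∈ L, (C x y - C x' y) * (A a (σ y) - A a' (σ y))) / 2 := by
  simp only [crossDiff, partialField, Matrix.of_apply, ← sum_sub_distrib, ← sum_add_distrib]
  congr! 2
  ring

variable [Fintype ι] [DecidableEq ι]

theorem determinedOff_partialField (C A : Matrix ι ι ℝ) (L : Finset ι) :
    DeterminedOff Lᶜ (partialField C A L) := fun σ τ h ↦ by
  ext x l
  exact sum_congr rfl fun y hy ↦ by rw [h y (by simpa using hy)]

theorem sum_mulVec_sq_le (C : Matrix ι ι ℝ) (w : ι → ℝ) :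
    ∑ x, (C.mulVec w x) ^ 2 ≤ ‖C‖ ^ 2 * ∑ y, w y ^ 2 := by
  have h := pow_le_pow_left₀ (norm_nonneg _) (C.l2_opNorm_mulVec (WithLp.toLp 2 w)) 2
  rw [mul_pow, EuclideanSpace.norm_sq_eq, EuclideanSpace.norm_sq_eq] at h
  simpa using h

theorem sum_partialField_sq_le (C A : Matrix ι ι ℝ) (L : Finset ι) (σ : Perm ι) :
    ∑ x, ∑ l, partialField C A L σ x l ^ 2 ≤ ‖C‖ ^ 2 * ∑ l, ∑ j, A l j ^ 2 := by
  let w (l y : ι) : ℝ := if y ∈ L then A l (σ y) else 0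
  have hw (x l : ι) : partialField C A L σ x l = C.mulVec (w l) x := by
    simp [partialField, w, Matrix.mulVec, dotProduct]
  rw [sum_comm, mul_sum]
  refine sum_le_sum fun l _ ↦ ?_
  calc ∑ x, partialField C A L σ x l ^ 2 = ∑ x, (C.mulVec (w l) x) ^ 2 := by simp only [hw]
    _ ≤ ‖C‖ ^ 2 * ∑ y, w l y ^ 2 := sum_mulVec_sq_le C (w l)
    _ ≤ ‖C‖ ^ 2 * ∑ y, A l (σ y) ^ 2 := by
        refine mul_le_mul_of_nonneg_left (sum_le_sum fun y _ ↦ ?_) (sq_nonneg _)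
        by_cases hy : y ∈ L
        · simp [w, hy]
        · simpa [w, hy] using sq_nonneg (A l (σ y))
    _ = ‖C‖ ^ 2 * ∑ j, A l j ^ 2 := by rw [Equiv.sum_comp σ fun j ↦ A l j ^ 2]

theorem sum_exp_sum_pairDiff_partialField_le [Fintype κ] {C A : Matrix ι ι ℝ} {L : Finset ι}
    {s : ℝ} (hs : ∀ σ x l, |partialField C A L σ x l| ≤ s / 2) {e : κ × Bool ↪ ι}
    (he : ∀ q, e q ∉ L) {d : ℕ} (hd : 0 < d)
    (hdL : d + 2 * Fintype.card κ + #L ≤ Fintype.card ι + 2) :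
    ∑ σ, Real.exp (∑ p, pairDiff (partialField C A L) e p σ) ≤
      (Fintype.card ι).factorial * Real.exp (2 / d * ((Real.cosh s - 1) / s ^ 2 *
        (‖C‖ ^ 2 * ∑ l, ∑ j, A l j ^ 2))) := by
  have hs₀ : 0 ≤ (Real.cosh s - 1) / s ^ 2 :=
    div_nonneg (sub_nonneg.2 (Real.one_le_cosh s)) (sq_nonneg s)
  have hsum (σ : Perm ι) : ∑ p, ∑ b, ∑ l, partialField C A L σ (e (p, b)) l ^ 2 ≤
      ‖C‖ ^ 2 * ∑ l, ∑ j, A l j ^ 2 :=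
    calc ∑ p, ∑ b, ∑ l, partialField C A L σ (e (p, b)) l ^ 2
        = ∑ x ∈ univ.map e, ∑ l, partialField C A L σ x l ^ 2 := by
          rw [sum_map, Fintype.sum_prod_type]
      _ ≤ ∑ x, ∑ l, partialField C A L σ x l ^ 2 :=
          sum_le_sum_of_subset_of_nonneg (subset_univ _) fun _ _ _ ↦ by positivity
      _ ≤ ‖C‖ ^ 2 * ∑ l, ∑ j, A l j ^ 2 := sum_partialField_sq_le C A L σ
  have hmgf := sum_mul_exp_sum_pairDiff_le (determinedOff_partialField C A L) hs
    (fun q ↦ mem_compl.2 (he q)) hd univ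
    (by rw [card_univ, card_compl]; have := card_le_univ L; omega)
    (H := fun _ ↦ 1) (fun _ _ _ ↦ rfl) fun _ ↦ zero_le_one
  simp only [one_mul] at hmgf
  calc ∑ σ, Real.exp (∑ p, pairDiff (partialField C A L) e p σ) ≤ _ := hmgf
    _ ≤ ∑ _σ : Perm ι, Real.exp (2 / d * ((Real.cosh s - 1) / s ^ 2 *
          (‖C‖ ^ 2 * ∑ l, ∑ j, A l j ^ 2))) := by
        gcongr with σ
        exact hsum σ
    _ = _ := by simp [Fintype.card_perm]

end PartialField

section QuadraticForm

open Finset Equiv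

variable {ι κ : Type*} [Fintype ι]

/-- The permuted quadratic form `∑ i, ∑ j, c i j * a (π i) (π j)`. -/
def permQuadForm (C A : Matrix ι ι ℝ) (π : Perm ι) : ℝ :=
  ∑ i, ∑ j, C i j * A (π i) (π j)

theorem permQuadForm_smul (c : ℝ) (C A : Matrix ι ι ℝ) (π : Perm ι) :
    permQuadForm (c • C) A π = c * permQuadForm C A π := by
  simp [permQuadForm, mul_sum, mul_assoc]

theorem eq_zero_of_card_lt_three {C : Matrix ι ι ℝ} (hcol : ∀ k, ∑ i, C i k = 0)
    (hdiag : ∀ i, C i i = 0) (hι : Fintype.card ι < 3) : C = 0 := by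
  ext i j
  rcases eq_or_ne i j with rfl | hij
  · exact hdiag i
  have hk (k : ι) (hki : k ≠ i) : C k j = 0 := by
    suffices k = j by rw [this, hdiag]
    by_contra hkj
    exact hι.not_ge (Fintype.two_lt_card_iff.2 ⟨k, i, j, hki, hkj, hij⟩)
  rw [Matrix.zero_apply, ← hcol j, Fintype.sum_eq_single i hk]

variable [DecidableEq ι]

theorem sum_perm_apply_apply_congr {M : Type*} [AddCommMonoid M] (f : ι → ι → M) {x y z w : ι}
    (hxy : x ≠ y) (hzw : z ≠ w) : ∑ ρ : Perm ι, f (ρ x) (ρ y) = ∑ ρ : Perm ι, f (ρ z) (ρ w) := by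
  obtain ⟨τ, rfl, rfl⟩ := MulAction.is_two_pretransitive_iff.1
    (Equiv.Perm.isMultiplyPretransitive ι 2) hxy hzw
  exact (Equiv.sum_comp (Equiv.mulRight τ) fun ρ ↦ f (ρ x) (ρ y)).symm

theorem card_mul_sum_perm_apply_apply {f : ι → ι → ℝ} (hf : ∀ i, f i i = 0) {x y : ι}
    (hxy : x ≠ y) :
    (Fintype.card ι * (Fintype.card ι - 1) : ℝ) * ∑ ρ : Perm ι, f (ρ x) (ρ y) =
      (Fintype.card ι).factorial * ∑ i, ∑ j, f i j := by
  have hcard : (#(univ : Finset ι).offDiag : ℝ) = Fintype.card ι * (Fintype.card ι - 1) := by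
    rw [offDiag_card, card_univ, Nat.cast_sub (Nat.le_mul_self _)]
    push_cast
    ring
  have hρ (ρ : Perm ι) : ∑ q ∈ (univ : Finset ι).offDiag, f (ρ q.1) (ρ q.2) = ∑ i, ∑ j, f i j :=
    calc ∑ q ∈ (univ : Finset ι).offDiag, f (ρ q.1) (ρ q.2) = ∑ q : ι × ι, f (ρ q.1) (ρ q.2) :=
          sum_subset (subset_univ _) fun q _ hq ↦ by
            rw [not_ne_iff.1 fun h ↦ hq (mem_offDiag.2 ⟨mem_univ _, mem_univ _, h⟩), hf]
      _ = ∑ i, ∑ j, f i j := by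
          rw [Fintype.sum_prod_type, Equiv.sum_comp ρ fun i ↦ ∑ j, f i (ρ j)]
          exact sum_congr rfl fun i _ ↦ Equiv.sum_comp ρ (f i)
  calc (Fintype.card ι * (Fintype.card ι - 1) : ℝ) * ∑ ρ : Perm ι, f (ρ x) (ρ y)
      = ∑ q ∈ (univ : Finset ι).offDiag, ∑ ρ : Perm ι, f (ρ q.1) (ρ q.2) := by
        rw [sum_congr rfl fun q hq ↦
          sum_perm_apply_apply_congr f (mem_offDiag.1 hq).2.2 hxy, sum_const, nsmul_eq_mul, hcard]
    _ = _ := by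
        rw [sum_comm, sum_congr rfl fun ρ _ ↦ hρ ρ]
        simp [Fintype.card_perm]

theorem sum_permQuadForm_eq_zero {C : Matrix ι ι ℝ} (hcol : ∀ k, ∑ i, C i k = 0)
    (hdiag : ∀ i, C i i = 0) (A : Matrix ι ι ℝ) : ∑ π, permQuadForm C A π = 0 := by
  rcases subsingleton_or_nontrivial ι with _ | _
  · have hC (i j : ι) : C i j = 0 := Subsingleton.elim i j ▸ hdiag i
    simp [permQuadForm, hC]
  obtain ⟨x, y, hxy⟩ := exists_pair_ne ι
  have hconst (i j : ι) : C i j * ∑ π : Perm ι, A (π i) (π j) =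
      C i j * ∑ π : Perm ι, A (π x) (π y) := by
    rcases eq_or_ne i j with rfl | hij
    · simp [hdiag]
    · rw [sum_perm_apply_apply_congr A hij hxy]
  calc ∑ π, permQuadForm C A π = ∑ j, ∑ i, C i j * ∑ π : Perm ι, A (π i) (π j) := by
        simp only [permQuadForm, mul_sum]
        rw [sum_comm, sum_comm_cycle]
    _ = 0 := by simp [hconst, ← sum_mul, hcol]

-- Summing over the position of `x` outside `x'` and `y` and using the column sums of `C`.
theorem card_sub_two_mul_sum_perm_mul {C : Matrix ι ι ℝ} (hcol : ∀ k, ∑ i, C i k = 0)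
    (hdiag : ∀ i, C i i = 0) (B : Matrix ι ι ℝ) {x x' y : ι} (hxx' : x ≠ x') (hxy : x ≠ y)
    (hx'y : x' ≠ y) :
    (Fintype.card ι - 2 : ℝ) * ∑ ρ : Perm ι, C (ρ x) (ρ y) * B (ρ x') (ρ y) =
      -∑ ρ : Perm ι, C (ρ x') (ρ y) * B (ρ x') (ρ y) := by
  let S (v : ι) : ℝ := ∑ ρ : Perm ι, C (ρ v) (ρ y) * B (ρ x') (ρ y)
  have hcard : (#({x', y} : Finset ι)ᶜ : ℝ) = Fintype.card ι - 2 := by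
    rw [card_compl, Nat.cast_sub (card_le_univ _), card_pair hx'y, Nat.cast_two]
  have hconst : ∀ v ∈ ({x', y} : Finset ι)ᶜ, S v = S x := fun v hv ↦ by
    simp only [mem_compl, mem_insert, mem_singleton, not_or] at hv
    refine (Equiv.sum_comp (Equiv.mulRight (swap v x)) _).symm.trans ?_
    simp [S, swap_apply_of_ne_of_ne, Ne.symm hv.1, Ne.symm hv.2, hxy.symm, hxx'.symm]
  have hy : S y = 0 := by simp [S, hdiag]
  have htotal : ∑ v, S v = 0 := by
    rw [sum_comm]
    refine sum_eq_zero fun ρ _ ↦ ?_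
    rw [← sum_mul, Equiv.sum_comp ρ fun i ↦ C i (ρ y), hcol, zero_mul]
  rw [← sum_compl_add_sum {x', y}, sum_congr rfl hconst, sum_const, nsmul_eq_mul, hcard,
    sum_pair hx'y, hy, add_zero] at htotal
  exact eq_neg_of_add_eq_zero_left htotal

theorem card_mul_sum_perm_sub_mul_sub {C : Matrix ι ι ℝ} (hcol : ∀ k, ∑ i, C i k = 0)
    (hdiag : ∀ i, C i i = 0) (B : Matrix ι ι ℝ) {x x' y : ι} (hxx' : x ≠ x') (hxy : x ≠ y)
    (hx'y : x' ≠ y) :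
    (Fintype.card ι * (Fintype.card ι - 2) : ℝ) * ∑ ρ : Perm ι,
        (C (ρ x) (ρ y) - C (ρ x') (ρ y)) * (B (ρ x) (ρ y) - B (ρ x') (ρ y)) =
      2 * ((Fintype.card ι).factorial * ∑ i, ∑ j, C i j * B i j) := by
  have hsame (v : ι) (hv : v ≠ y) := card_mul_sum_perm_apply_apply
    (f := fun i j ↦ C i j * B i j) (by simp [hdiag]) hv
  have hmixed := card_sub_two_mul_sum_perm_mul hcol hdiag B hxx' hxy hx'y
  have hmixed' := card_sub_two_mul_sum_perm_mul hcol hdiag B hxx'.symm hx'y hxy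
  simp only [sub_mul, mul_sub, sum_sub_distrib] at hmixed hmixed' ⊢
  linear_combination hsame x hxy + hsame x' hx'y - (Fintype.card ι : ℝ) * (hmixed + hmixed')

theorem sum_perm_pairDiff_partialField [Fintype κ] {C : Matrix ι ι ℝ}
    (hcol : ∀ k, ∑ i, C i k = 0) (hdiag : ∀ i, C i i = 0) (hι : 3 ≤ Fintype.card ι)
    (A : Matrix ι ι ℝ) {L : Finset ι} {e : κ × Bool ↪ ι} (he : ∀ q, e q ∉ L) (π : Perm ι) :
    ∑ ρ : Perm ι, ∑ p, pairDiff (partialField C A (L.map ρ.toEmbedding))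
        (e.trans ρ.toEmbedding) p π =
      (Fintype.card ι).factorial * (Fintype.card κ * #L /
        (Fintype.card ι * (Fintype.card ι - 2)) * permQuadForm C A π) := by
  have hι' : (3 : ℝ) ≤ Fintype.card ι := by exact_mod_cast hι
  have hn : (Fintype.card ι : ℝ) * (Fintype.card ι - 2) ≠ 0 :=
    mul_ne_zero (by linarith) (by linarith)
  let B : Matrix ι ι ℝ := A.submatrix π π
  have hterm : ∀ p, ∀ y ∈ L, ∑ ρ : Perm ι,
      (C (ρ (e (p, false))) (ρ y) - C (ρ (e (p, true))) (ρ y)) *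
        (B (ρ (e (p, false))) (ρ y) - B (ρ (e (p, true))) (ρ y)) =
      2 * ((Fintype.card ι).factorial * permQuadForm C A π) /
        (Fintype.card ι * (Fintype.card ι - 2)) := fun p y hy ↦ by
    rw [eq_div_iff hn, mul_comm]
    exact card_mul_sum_perm_sub_mul_sub hcol hdiag B (e.injective.ne (by simp))
      (ne_of_mem_of_not_mem hy (he _)).symm (ne_of_mem_of_not_mem hy (he _)).symm
  have hpair (p : κ) : ∑ ρ : Perm ι, pairDiff (partialField C A (L.map ρ.toEmbedding))
      (e.trans ρ.toEmbedding) p π = #L * ((Fintype.card ι).factorial * permQuadForm C A π) /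
        (Fintype.card ι * (Fintype.card ι - 2)) := by
    simp only [pairDiff, crossDiff_partialField, sum_map, ← sum_div]
    rw [sum_comm]
    refine (congrArg (· / 2) (sum_congr rfl (hterm p))).trans ?_
    rw [sum_const, nsmul_eq_mul]
    ring
  rw [sum_comm]
  simp only [hpair, sum_const, card_univ, nsmul_eq_mul]
  ring

end QuadraticForm

section ExponentialMoment

open Finset Equiv
open scoped Matrix.Norms.L2Operator

variable {ι κ : Type*} [Fintype ι] [DecidableEq ι] {C A : Matrix ι ι ℝ}

theorem sum_exp_mul_permQuadForm_le [Fintype κ] (hcol : ∀ k, ∑ i, C i k = 0)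
    (hdiag : ∀ i, C i i = 0) (hι : 3 ≤ Fintype.card ι) {L : Finset ι} {s : ℝ}
    (hs : ∀ i j (σ τ : Perm ι), |∑ k ∈ L, C i (σ k) * A j (τ k)| ≤ s / 2)
    {e : κ × Bool ↪ ι} (he : ∀ q, e q ∉ L) {d : ℕ} (hd : 0 < d)
    (hdL : d + 2 * Fintype.card κ + #L ≤ Fintype.card ι + 2) :
    ∑ π, Real.exp (Fintype.card κ * #L / (Fintype.card ι * (Fintype.card ι - 2)) *
        permQuadForm C A π) ≤
      (Fintype.card ι).factorial * Real.exp (2 / d * ((Real.cosh s - 1) / s ^ 2 *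
        (‖C‖ ^ 2 * ∑ l, ∑ j, A l j ^ 2))) := by
  set c : ℝ := Fintype.card κ * #L / (Fintype.card ι * (Fintype.card ι - 2))
  set V := Real.exp (2 / d * ((Real.cosh s - 1) / s ^ 2 * (‖C‖ ^ 2 * ∑ l, ∑ j, A l j ^ 2)))
  let T (ρ π : Perm ι) : ℝ := ∑ p, pairDiff (partialField C A (L.map ρ.toEmbedding))
    (e.trans ρ.toEmbedding) p π
  have hjensen (π : Perm ι) : (Fintype.card ι).factorial * Real.exp (c * permQuadForm C A π) ≤
      ∑ ρ, Real.exp (T ρ π) := by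
    rw [← Fintype.card_perm]
    apply card_mul_exp_le_sum_exp
    rw [Fintype.card_perm]
    exact sum_perm_pairDiff_partialField hcol hdiag hι A he π
  have hdecoupled (ρ : Perm ι) : ∑ π, Real.exp (T ρ π) ≤ (Fintype.card ι).factorial * V := by
    refine sum_exp_sum_pairDiff_partialField_le (fun σ x l ↦ ?_) (fun q ↦ ?_) hd ?_
    · simpa [partialField] using hs x l ρ (σ * ρ)
    · simpa using he q
    · rwa [card_map]
  refine le_of_mul_le_mul_left ?_ (Nat.cast_pos.2 (Fintype.card ι).factorial_pos : (0 : ℝ) < _)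
  calc (Fintype.card ι).factorial * ∑ π, Real.exp (c * permQuadForm C A π)
      ≤ ∑ π, ∑ ρ, Real.exp (T ρ π) := by
        rw [mul_sum]
        exact sum_le_sum fun π _ ↦ hjensen π
    _ = ∑ ρ, ∑ π, Real.exp (T ρ π) := sum_comm
    _ ≤ ∑ _ρ : Perm ι, (Fintype.card ι).factorial * V := sum_le_sum fun ρ _ ↦ hdecoupled ρ
    _ = (Fintype.card ι).factorial * ((Fintype.card ι).factorial * V) := by
        simp [Fintype.card_perm]

-- With `r ≈ n / 8` pairs outside `L`, at least `n / 4` positions are unrevealed at every step.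
theorem exists_sum_exp_mul_permQuadForm_le (hcol : ∀ k, ∑ i, C i k = 0)
    (hdiag : ∀ i, C i i = 0) (hι : 3 ≤ Fintype.card ι) {L : Finset ι}
    (hL : #L = Fintype.card ι / 2) {s : ℝ}
    (hs : ∀ i j (σ τ : Perm ι), |∑ k ∈ L, C i (σ k) * A j (τ k)| ≤ s / 2) :
    ∃ c : ℝ, 1 / 16 ≤ c ∧ ∑ π, Real.exp (c * permQuadForm C A π) ≤
      (Fintype.card ι).factorial * Real.exp (8 / Fintype.card ι * ((Real.cosh s - 1) / s ^ 2 *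
        (‖C‖ ^ 2 * ∑ l, ∑ j, A l j ^ 2))) := by
  set n := Fintype.card ι
  obtain ⟨r, hr⟩ : ∃ r, r = (n - n / 2 + 3) / 4 := ⟨_, rfl⟩
  obtain ⟨d, hd⟩ : ∃ d, d = n - n / 2 - 2 * r + 2 := ⟨_, rfl⟩
  have hs₀ : 0 ≤ (Real.cosh s - 1) / s ^ 2 :=
    div_nonneg (sub_nonneg.2 (Real.one_le_cosh s)) (sq_nonneg s)
  have hn₃ : (3 : ℝ) ≤ n := by exact_mod_cast hι
  have hr₈ : (n : ℝ) ≤ 8 * r := by exact_mod_cast (by omega : n ≤ 8 * r)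
  have hL₂ : (n : ℝ) - 1 ≤ 2 * #L := by
    rw [sub_le_iff_le_add]
    exact_mod_cast (by omega : n ≤ 2 * #L + 1)
  have hd₄ : (n : ℝ) ≤ 4 * d := by exact_mod_cast (by omega : n ≤ 4 * d)
  obtain ⟨e⟩ : Nonempty (Fin r × Bool ↪ {x // x ∉ L}) := by
    refine Function.Embedding.nonempty_of_card_le ?_
    simp only [Fintype.card_prod, Fintype.card_fin, Fintype.card_bool, Fintype.card_subtype_compl,
      Fintype.card_coe]
    omega
  refine ⟨_, ?_, (sum_exp_mul_permQuadForm_le hcol hdiag hι hs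
    (e := e.trans (Function.Embedding.subtype _)) (fun q ↦ (e q).2) (d := d) (by omega)
    (by rw [Fintype.card_fin]; omega)).trans ?_⟩
  · rw [Fintype.card_fin, le_div_iff₀ (mul_pos (by linarith) (by linarith))]
    calc (1 / 16 * (n * (n - 2)) : ℝ) ≤ n / 8 * ((n - 1) / 2) := by linarith
      _ ≤ r * #L := mul_le_mul (by linarith) (by linarith) (by linarith) (by positivity)
  · have hdn : (2 : ℝ) / d ≤ 8 / n := by
      rw [div_le_div_iff₀ (by linarith) (by linarith)]
      linarith
    gcongr

theorem exists_sum_exp_div_mul_permQuadForm_le (hcol : ∀ k, ∑ i, C i k = 0)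
    (hdiag : ∀ i, C i i = 0) (hι : 3 ≤ Fintype.card ι) {L : Finset ι}
    (hL : #L = Fintype.card ι / 2) {ν : ℝ} (hν : 0 < ν)
    (hCA : ∀ i j (σ τ : Perm ι), |∑ k ∈ L, C i (σ k) * A j (τ k)| ≤ ν) {s : ℝ} (hs : 0 < s) :
    ∃ c : ℝ, 1 / 16 ≤ c ∧ ∑ π, Real.exp (c * (s / (2 * ν)) * permQuadForm C A π) ≤
      (Fintype.card ι).factorial * Real.exp (2 * (‖C‖ ^ 2 * (∑ l, ∑ j, A l j ^ 2) /
        (Fintype.card ι * ν ^ 2)) * (Real.cosh s - 1)) := by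
  have hbound (i j : ι) (σ τ : Perm ι) :
      |∑ k ∈ L, ((s / (2 * ν)) • C) i (σ k) * A j (τ k)| ≤ s / 2 := by
    simp only [Matrix.smul_apply, smul_eq_mul, mul_assoc, ← mul_sum]
    rw [abs_mul, abs_of_pos (by positivity)]
    calc s / (2 * ν) * |∑ k ∈ L, C i (σ k) * A j (τ k)| ≤ s / (2 * ν) * ν := by
          gcongr
          exact hCA i j σ τ
      _ = s / 2 := by field_simp
  obtain ⟨c, hc, hexp⟩ := exists_sum_exp_mul_permQuadForm_le
    (fun k ↦ by simp [← mul_sum, hcol]) (by simp [hdiag]) hι hL hbound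
  refine ⟨c, hc, ?_⟩
  simp only [permQuadForm_smul, ← mul_assoc c] at hexp
  refine hexp.trans_eq ?_
  congr 2
  rw [norm_smul, mul_pow, Real.norm_eq_abs, sq_abs]
  field_simp
  ring

end ExponentialMoment

section Tail

variable {N : ℕ}

theorem permProb_le_one (p : Equiv.Perm (Fin N) → Prop) : permProb N p ≤ 1 := by
  refine div_le_one_of_le₀ ?_ (Nat.cast_nonneg _)
  have := Finset.card_filter_le Finset.univ p
  rw [Finset.card_univ, Fintype.card_perm, Fintype.card_fin] at this
  exact_mod_cast this

theorem permProb_ge_le_exp_mul_permExp (X : Equiv.Perm (Fin N) → ℝ) {l : ℝ} (hl : 0 ≤ l)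
    (t : ℝ) :
    permProb N (fun σ ↦ X σ ≥ t) ≤
      Real.exp (-(l * t)) * permExp N fun σ ↦ Real.exp (l * X σ) := by
  unfold permProb permExp
  rw [← mul_div_assoc, Finset.mul_sum, Finset.card_filter]
  push_cast
  gcongr with σ
  split_ifs with h
  · rw [← Real.exp_add, Real.one_le_exp_iff]
    linarith [mul_le_mul_of_nonneg_left h hl]
  · positivity

theorem frobNorm_sq {m n : ℕ} (M : Matrix (Fin m) (Fin n) ℝ) :
    frobNorm M ^ 2 = ∑ i, ∑ j, M i j ^ 2 :=
  Real.sq_sqrt (by positivity)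

theorem permExp_permQuadForm {C : Matrix (Fin N) (Fin N) ℝ} (hcol : ∀ k, ∑ i, C i k = 0)
    (hdiag : ∀ i, C i i = 0) (A : Matrix (Fin N) (Fin N) ℝ) :
    permExp N (permQuadForm C A) = 0 := by
  rw [permExp, sum_permQuadForm_eq_zero hcol hdiag, zero_div]

theorem bennett_exponent_le {n ν S t c : ℝ} (hn : 0 < n) (hν : 0 < ν) (hS : 0 < S) (ht : 0 ≤ t)
    (hc : 1 / 16 ≤ c) :
    -(c * (Real.log (1 + n * ν * t / (64 * S)) / (2 * ν)) * t) +
        2 * (S / (n * ν ^ 2)) * (Real.cosh (Real.log (1 + n * ν * t / (64 * S))) - 1) ≤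
      -(t / (64 * ν)) * Real.log (1 + n * ν * t / (64 * S)) := by
  set w := n * ν * t / (64 * S) with hw
  have hw₀ : 0 ≤ w := by positivity
  have hlog : 0 ≤ Real.log (1 + w) := Real.log_nonneg (by linarith)
  have hvar : 2 * (S / (n * ν ^ 2)) * (Real.cosh (Real.log (1 + w)) - 1) ≤
      t / (64 * ν) * Real.log (1 + w) :=
    calc 2 * (S / (n * ν ^ 2)) * (Real.cosh (Real.log (1 + w)) - 1)
        ≤ 2 * (S / (n * ν ^ 2)) * (w / 2 * Real.log (1 + w)) := by
          gcongr
          exact cosh_log_one_add_sub_one_le hw₀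
      _ = t / (64 * ν) * Real.log (1 + w) := by
          rw [hw]
          field_simp
  have hlin : 2 * (t / (64 * ν) * Real.log (1 + w)) ≤ c * (Real.log (1 + w) / (2 * ν)) * t :=
    calc 2 * (t / (64 * ν) * Real.log (1 + w)) = 1 / 16 * (Real.log (1 + w) / (2 * ν)) * t := by
          ring
      _ ≤ c * (Real.log (1 + w) / (2 * ν)) * t := by gcongr
  linarith

theorem combinatorial_bennett_general {C A : Matrix (Fin N) (Fin N) ℝ}
    (hcol : ∀ k, ∑ i, C i k = 0) (hdiag : ∀ i, C i i = 0) {L : Finset (Fin N)}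
    (hL : L.card = N / 2) {ν : ℝ} (hν : 0 < ν)
    (hCA : ∀ i j (σ τ : Equiv.Perm (Fin N)), |∑ k ∈ L, C i (σ k) * A j (τ k)| ≤ ν)
    {t : ℝ} (ht : 0 ≤ t) :
    permProb N (fun σ ↦ permQuadForm C A σ - permExp N (permQuadForm C A) ≥ t) ≤
      Real.exp (-(t / (64 * ν)) *
        Real.log (1 + N * ν * t / (64 * opNorm C ^ 2 * frobNorm A ^ 2))) := by
  simp only [permExp_permQuadForm hcol hdiag, sub_zero, mul_assoc (64 : ℝ)]
  set S := opNorm C ^ 2 * frobNorm A ^ 2 with hS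
  rcases (by positivity : 0 ≤ S).eq_or_lt with hS₀ | hS₀
  · simpa [← hS₀] using permProb_le_one _
  rcases ht.eq_or_lt with rfl | ht₀
  · simpa using permProb_le_one _
  have hN : 3 ≤ N := by
    by_contra hN
    have : C = 0 := eq_zero_of_card_lt_three hcol hdiag (by simpa using hN)
    simp [hS, this, opNorm] at hS₀
  set s := Real.log (1 + N * ν * t / (64 * S))
  have hs₀ : 0 < s := Real.log_pos (lt_add_of_pos_right 1 (by positivity))
  obtain ⟨c, hc, hexp⟩ := exists_sum_exp_div_mul_permQuadForm_le hcol hdiag (by simpa using hN)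
    (by simpa using hL) hν hCA hs₀
  have hmoment : permExp N (fun σ ↦ Real.exp (c * (s / (2 * ν)) * permQuadForm C A σ)) ≤
      Real.exp (2 * (S / (N * ν ^ 2)) * (Real.cosh s - 1)) := by
    rw [Fintype.card_fin, ← frobNorm_sq] at hexp
    exact div_le_of_le_mul₀ (by positivity) (by positivity) (hexp.trans_eq (mul_comm _ _))
  calc permProb N (fun σ ↦ permQuadForm C A σ ≥ t)
      ≤ Real.exp (-(c * (s / (2 * ν)) * t)) *
          permExp N fun σ ↦ Real.exp (c * (s / (2 * ν)) * permQuadForm C A σ) :=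
        permProb_ge_le_exp_mul_permExp _ (by positivity) t
    _ ≤ Real.exp (-(c * (s / (2 * ν)) * t)) *
          Real.exp (2 * (S / (N * ν ^ 2)) * (Real.cosh s - 1)) := by gcongr
    _ ≤ Real.exp (-(t / (64 * ν)) * s) := by
        rw [← Real.exp_add]
        exact Real.exp_le_exp.2 (bennett_exponent_le (by positivity) hν hS₀ ht hc)

end Tail

/-- A combinatorial Bennett-type inequality. -/
theorem combinatorial_bennett :
    ∃ K : ℝ, 0 < K ∧
      ∀ (N : ℕ) (hN : 0 < N)
        (C A : Matrix (Fin N) (Fin N) ℝ),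
        (∀ k, ∑ i, C i k = 0) →
        (∀ k, ∑ j, C k j = 0) →
        (∀ i, C i i = 0) →
        ∀ ν : ℝ,
          ν = Finset.univ.sup'
              ⟨((⟨0, hN⟩, ⟨0, hN⟩), (1, 1)), Finset.mem_univ _⟩
              (fun p : (Fin N × Fin N) × Equiv.Perm (Fin N) × Equiv.Perm (Fin N) =>
                |∑ k ∈ Finset.univ.filter (fun k : Fin N => (k : ℕ) < N / 2),
                    C p.1.1 (p.2.1 k) * A p.1.2 (p.2.2 k)|) →
          0 < ν →
          ∀ t : ℝ, 0 ≤ t →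
            permProb N (fun σ =>
                (∑ i, ∑ j, C i j * A (σ i) (σ j))
                  - permExp N (fun σ' => ∑ i, ∑ j, C i j * A (σ' i) (σ' j)) ≥ t)
              ≤ Real.exp (-(t / (K * ν)) *
                  Real.log (1 + (N : ℝ) * ν * t /
                    (K * (opNorm C) ^ 2 * (frobNorm A) ^ 2))) := by
  refine ⟨64, by norm_num, fun N hN C A hcol _ hdiag ν hνmax hν t ht ↦ ?_⟩
  have hcard : (Finset.univ.filter fun k : Fin N ↦ (k : ℕ) < N / 2).card = N / 2 := by
    simpa [Fin.card_filter_val_lt] using Nat.div_le_self N 2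
  refine combinatorial_bennett_general hcol hdiag hcard hν (fun i j σ τ ↦ ?_) ht
  rw [hνmax]
  exact Finset.le_sup' (fun p : (Fin N × Fin N) × Equiv.Perm (Fin N) × Equiv.Perm (Fin N) ↦
    |∑ k ∈ Finset.univ.filter (fun k : Fin N => (k : ℕ) < N / 2),
      C p.1.1 (p.2.1 k) * A p.1.2 (p.2.2 k)|) (Finset.mem_univ ((i, j), (σ, τ)))
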